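/- Every STJS-matrix A is a τ^<-matrix: l(A) > 0, every principal submatrix of A has a real eigenvalue, and l(A(α)) < l(A(β)) < ∞ whenever ∅ ≠ β ⊊ α ⊆ {1,…,n}. -/

import Mathlib

open Matrix

/-- The minor of the matrix `A` on the row set `α` and the column set `β`
(rows and columns taken in increasing order); junk value `0` if the
cardinalities of `α` and `β` differ. -/
noncomputable def minorOn {n : ℕ} (A : Matrix (Fin n) (Fin n) ℝ)
    (α β : Finset (Fin n)) : ℝ :=
  if h : β.card = α.card then
    (A.submatrix (⇑(α.orderEmbOfFin rfl)) (⇑(β.orderEmbOfFin h))).det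
  else 0

/-- The principal submatrix `A(α)` of `A` on the index set `α`. -/
def psub {n : ℕ} (A : Matrix (Fin n) (Fin n) ℝ) (α : Finset (Fin n)) :
    Matrix (Fin α.card) (Fin α.card) ℝ :=
  A.submatrix (⇑(α.orderEmbOfFin rfl)) (⇑(α.orderEmbOfFin rfl))

/-- `A` is a Kotelyansky (K) matrix: all principal minors are positive and all
almost principal minors are nonnegative. -/
def IsK {n : ℕ} (A : Matrix (Fin n) (Fin n) ℝ) : Prop :=
  (∀ α : Finset (Fin n), α.Nonempty → 0 < minorOn A α α) ∧
  (∀ (α : Finset (Fin n)) (r s : Fin n), r ∈ α → s ∈ α → r ≠ s →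
    0 ≤ minorOn A (α.erase r) (α.erase s))

/-- `A` is a strictly Kotelyansky (SK) matrix: all principal minors and all
almost principal minors are positive. -/
def IsSK {n : ℕ} (A : Matrix (Fin n) (Fin n) ℝ) : Prop :=
  (∀ α : Finset (Fin n), α.Nonempty → 0 < minorOn A α α) ∧
  (∀ (α : Finset (Fin n)) (r s : Fin n), r ∈ α → s ∈ α → r ≠ s →
    0 < minorOn A (α.erase r) (α.erase s))

/-- The `j`-th compound matrix of `A`: the matrix of all `j×j` minors of `A`,
indexed by the `j`-element subsets of the index set. -/
noncomputable def compound {m : ℕ} (A : Matrix (Fin m) (Fin m) ℝ) (j : ℕ) :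
    Matrix {s : Finset (Fin m) // s.card = j} {s : Finset (Fin m) // s.card = j} ℝ :=
  fun s t => minorOn A s.1 t.1

/-- `A` is J-sign-symmetric for the subset `J` of its index set. -/
def IsJS {ι : Type*} (J : Set ι) (A : Matrix ι ι ℝ) : Prop :=
  (∀ i j, ((i ∈ J ∧ j ∈ J) ∨ (i ∉ J ∧ j ∉ J)) → 0 ≤ A i j) ∧
  (∀ i j, ((i ∈ J ∧ j ∉ J) ∨ (i ∉ J ∧ j ∈ J)) → A i j ≤ 0)

/-- `A` is strictly J-sign-symmetric: J-sign-symmetric with no zero entries. -/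
def IsSJS {ι : Type*} (J : Set ι) (A : Matrix ι ι ℝ) : Prop :=
  IsJS J A ∧ ∀ i j, A i j ≠ 0

/-- `A` is strictly totally J-sign-symmetric: every compound matrix `A^(j)`,
`1 ≤ j ≤ n`, is strictly J-sign-symmetric for some subset of its index set. -/
def IsSTJS {n : ℕ} (A : Matrix (Fin n) (Fin n) ℝ) : Prop :=
  ∀ j, 1 ≤ j → j ≤ n →
    ∃ J : Set {s : Finset (Fin n) // s.card = j}, IsSJS J (compound A j)

/-- `A` is J-sign-symmetric Kotelyansky (JSK). -/
def IsJSK {n : ℕ} (A : Matrix (Fin n) (Fin n) ℝ) : Prop :=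
  (∀ α : Finset (Fin n), α.Nonempty → 0 < minorOn A α α) ∧
  ∀ α : Finset (Fin n), 2 ≤ α.card →
    ∃ J : Set {s : Finset (Fin α.card) // s.card = α.card - 1},
      IsJS J (compound (psub A α) (α.card - 1))

/-- `A` is strictly J-sign-symmetric Kotelyansky (SJSK). -/
def IsSJSK {n : ℕ} (A : Matrix (Fin n) (Fin n) ℝ) : Prop :=
  0 < A.det ∧
  ∀ α : Finset (Fin n), 2 ≤ α.card →
    ∃ J : Set {s : Finset (Fin α.card) // s.card = α.card - 1},
      IsSJS J (compound (psub A α) (α.card - 1))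

/-- `l(B)`: the smallest real eigenvalue of `B`, or `∞` (`⊤` in `EReal`) if `B`
has no real eigenvalues. -/
noncomputable def lval {m : ℕ} (B : Matrix (Fin m) (Fin m) ℝ) : EReal :=
  sInf (insert (⊤ : EReal) ((fun t : ℝ => (t : EReal)) '' {t : ℝ | B.charpoly.IsRoot t}))

/-!
The inverse of a principal submatrix `A(α)` is its adjugate up to a positive factor, and the
entries of the adjugate are almost principal minors. Their sign pattern makes `A(α)⁻¹` similar,
through a diagonal matrix of signs, to an entrywise positive matrix. An eigenvector of
`A(α \ {i})` for a positive eigenvalue `t`, extended by zero, becomes a vector `v` vanishing at `i`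
with `t⁻¹ v` equal to the positive matrix applied to `v + b eᵢ`. Choosing the sign of `v` so that
`b ≤ 0`, the positive part of `v` is a strict subeigenvector for `t⁻¹`, and the Collatz–Wielandt
argument gives an eigenvalue of `A(α)⁻¹` larger than `t⁻¹`, that is, an eigenvalue of `A(α)` below
`t`. All real eigenvalues are positive because all principal minors are.
-/

lemma mulVec_extend {ι κ μ R : Type*} [Fintype ι] [Fintype κ] [NonUnitalNonAssocSemiring R]
    (A : Matrix μ ι R) {f : κ → ι} (hf : Function.Injective f) (w : κ → R) :
    A *ᵥ Function.extend f w 0 = A.submatrix id f *ᵥ w := by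
  ext j
  refine (Fintype.sum_of_injective f hf _ _ (fun i hi => ?_) fun l => ?_).symm
  · rw [Function.extend_apply' w (0 : ι → R) i hi, Pi.zero_apply, mul_zero]
  · simp only [hf.extend_apply, submatrix_apply, id]

section Spectrum

variable {ι κ K : Type*} [Fintype ι] [DecidableEq ι] [Fintype κ] [DecidableEq κ] [Field K]

lemma mem_spectrum_iff_exists_mulVec_eq_smul {M : Matrix ι ι K} {t : K} :
    t ∈ spectrum K M ↔ ∃ v ≠ 0, M *ᵥ v = t • v := by
  rw [← spectrum_toLin', ← Module.End.hasEigenvalue_iff_mem_spectrum]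
  constructor
  · intro h
    obtain ⟨v, hv⟩ := h.exists_hasEigenvector
    exact ⟨v, hv.2, hv.apply_eq_smul⟩
  · rintro ⟨v, hv, h⟩
    exact Module.End.hasEigenvalue_of_hasEigenvector
      (Module.End.hasEigenvector_iff.mpr ⟨Module.End.mem_eigenspace_iff.mpr h, hv⟩)

lemma inv_mem_spectrum_of_mem_spectrum_inv {M : Matrix ι ι K} (hM : IsUnit M) {t : K}
    (ht : t ∈ spectrum K M⁻¹) : t⁻¹ ∈ spectrum K M := by
  obtain ⟨u, rfl⟩ := hM
  rw [← coe_units_inv] at ht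
  exact spectrum.inv₀_mem_iff.mpr ht

lemma spectrum_submatrix_equiv (M : Matrix ι ι K) (e : κ ≃ ι) :
    spectrum K (M.submatrix e e) = spectrum K M := by
  ext t
  rw [mem_spectrum_iff_isRoot_charpoly, mem_spectrum_iff_isRoot_charpoly]
  have h := charpoly_reindex e.symm M
  rw [reindex_apply, e.symm_symm] at h
  rw [h]

end Spectrum

section PMatrix

variable {ι κ R : Type*} [DecidableEq κ]

/-- The principal submatrix of `A` on the index set `α`, with rows and columns indexed by the
elements of `α` themselves; unlike `psub` it needs no enumeration of `α`. -/
def principal (A : Matrix ι ι R) (α : Finset ι) : Matrix α α R :=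
  A.submatrix (↑) (↑)

/-- `A` is a P-matrix: all its principal minors are positive. -/
def IsPMatrix [DecidableEq ι] [CommRing R] [LinearOrder R] (A : Matrix ι ι R) : Prop :=
  ∀ α : Finset ι, 0 < (principal A α).det

lemma det_principal_map [DecidableEq ι] [CommRing R] (A : Matrix ι ι R) (f : κ ↪ ι)
    (α : Finset κ) :
    (principal A (α.map f)).det = (principal (A.submatrix f f) α).det :=
  (det_submatrix_equiv_self (α.equivMap f) (principal A (α.map f))).symm

lemma IsPMatrix.submatrix [DecidableEq ι] [CommRing R] [LinearOrder R] {A : Matrix ι ι R}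
    (hA : IsPMatrix A) (f : κ ↪ ι) : IsPMatrix (A.submatrix f f) :=
  fun α => det_principal_map A f α ▸ hA (α.map f)

variable [Fintype κ]

-- The coefficients of the characteristic polynomial are, up to alternating signs, the sums of
-- the principal minors of a given size.
lemma IsPMatrix.eval_charpoly_neg_pos [CommRing R] [LinearOrder R] [IsStrictOrderedRing R]
    {A : Matrix κ κ R} (hA : IsPMatrix A) {s : R} (hs : 0 ≤ s) :
    0 < (-1) ^ Fintype.card κ * A.charpoly.eval (-s) := by
  set N := Fintype.card κ
  let E : ℕ → R := fun k => ∑ α ∈ Finset.univ.powersetCard k, (principal A α).det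
  have hE : ∀ k ≤ N, 0 < E k := fun k hk =>
    Finset.sum_pos (fun α _ => hA α) (Finset.powersetCard_nonempty.mpr hk)
  have hcoeff : ∀ k ≤ N, A.charpoly.coeff (N - k) = (-1) ^ k * E k :=
    charpoly_coeff_eq_sum_minors A
  have hdeg : A.charpoly.natDegree = N := charpoly_natDegree_eq_dim A
  have heval : (-1) ^ N * A.charpoly.eval (-s) =
      ∑ k ∈ Finset.range (N + 1), E k * s ^ (N - k) := by
    rw [Polynomial.eval_eq_sum_range, hdeg, ← Finset.sum_range_reflect,
      Finset.mul_sum]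
    refine Finset.sum_congr rfl fun k hk => ?_
    have hkN : k ≤ N := Nat.lt_succ_iff.mp (Finset.mem_range.mp hk)
    obtain ⟨l, hl⟩ := Nat.exists_eq_add_of_le hkN
    have hsq : ∀ m : ℕ, ((-1 : R) ^ m) * (-1) ^ m = 1 := fun m => by rw [← mul_pow]; norm_num
    rw [Nat.add_sub_cancel, hcoeff k hkN, neg_pow s, hl, Nat.add_sub_cancel_left, pow_add]
    linear_combination E k * s ^ l * ((-1) ^ l * (-1) ^ l * hsq k + hsq l)
  rw [heval]
  refine Finset.sum_pos' (fun k hk => ?_) ⟨N, Finset.self_mem_range_succ N, ?_⟩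
  · exact mul_nonneg (hE k (Nat.lt_succ_iff.mp (Finset.mem_range.mp hk))).le (pow_nonneg hs _)
  · simpa using hE N le_rfl

lemma IsPMatrix.pos_of_mem_spectrum [Field R] [LinearOrder R] [IsStrictOrderedRing R]
    {A : Matrix κ κ R} (hA : IsPMatrix A) {t : R} (ht : t ∈ spectrum R A) : 0 < t := by
  by_contra! ht₀
  have hpos := hA.eval_charpoly_neg_pos (neg_nonneg.mpr ht₀)
  rw [neg_neg, (mem_spectrum_iff_isRoot_charpoly.mp ht).eq_zero, mul_zero] at hpos
  exact hpos.false

end PMatrix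

section PositiveMatrix

lemma mulVec_pos_of_pos {ι κ R : Type*} [Fintype ι] [Semiring R] [PartialOrder R]
    [IsStrictOrderedRing R] {P : Matrix κ ι R} (hP : ∀ i j, 0 < P i j) {u : ι → R} (hu : 0 < u)
    (i : κ) : 0 < (P *ᵥ u) i := by
  obtain ⟨hu₀, j, hj⟩ := Pi.lt_def.mp hu
  exact Finset.sum_pos' (fun k _ => mul_nonneg (hP i k).le (hu₀ k))
    ⟨j, Finset.mem_univ j, mul_pos (hP i j) hj⟩

lemma mulVec_mono_of_nonneg {ι κ R : Type*} [Fintype ι] [Semiring R] [PartialOrder R]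
    [IsOrderedRing R] {P : Matrix κ ι R} (hP : ∀ i j, 0 ≤ P i j) : Monotone (P *ᵥ ·) :=
  fun _ _ huv i => dotProduct_le_dotProduct_of_nonneg_left huv (hP i)

variable {ι : Type*} [Fintype ι] {P : Matrix ι ι ℝ}

lemma exists_mem_stdSimplex_smul_le_mulVec {u : ι → ℝ} (hu : 0 < u) {c : ℝ}
    (h : c • u ≤ P *ᵥ u) : ∃ x ∈ stdSimplex ℝ ι, c • x ≤ P *ᵥ x := by
  obtain ⟨hu₀, j, hj⟩ := Pi.lt_def.mp hu
  have hsum : 0 < ∑ i, u i := Finset.sum_pos' (fun i _ => hu₀ i) ⟨j, Finset.mem_univ j, hj⟩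
  refine ⟨(∑ i, u i)⁻¹ • u, ⟨fun i => mul_nonneg (inv_nonneg.mpr hsum.le) (hu₀ i), ?_⟩, ?_⟩
  · simp only [Pi.smul_apply, smul_eq_mul, ← Finset.mul_sum, inv_mul_cancel₀ hsum.ne']
  · rw [mulVec_smul, smul_comm]
    exact smul_le_smul_of_nonneg_left h (inv_nonneg.mpr hsum.le)

-- Applying `P` to `c • u < P *ᵥ u` makes the inequality strict in every coordinate at `P *ᵥ u`,
-- which leaves room to enlarge `c`.
lemma exists_gt_smul_le_mulVec (hP : ∀ i j, 0 < P i j) {u : ι → ℝ} (hu : 0 < u) {c : ℝ}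
    (h : c • u < P *ᵥ u) : ∃ c' > c, ∃ x ∈ stdSimplex ℝ ι, c' • x ≤ P *ᵥ x := by
  set y := P *ᵥ u
  obtain ⟨-, i, -⟩ := Pi.lt_def.mp hu
  have hy : 0 < y := Pi.lt_def.mpr
    ⟨fun j => (mulVec_pos_of_pos hP hu j).le, i, mulVec_pos_of_pos hP hu i⟩
  have hlt : ∀ j, c * y j < (P *ᵥ y) j := fun j => by
    simpa [mulVec_sub, mulVec_smul, y] using mulVec_pos_of_pos hP (sub_pos.mpr h) j
  have hnear : ∀ᶠ c' in nhdsWithin c (Set.Ioi c), ∀ j, c' * y j < (P *ᵥ y) j :=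
    Filter.eventually_all.mpr fun j => ((continuous_mul_const (y j)).tendsto c).eventually_lt_const
      (hlt j) |>.filter_mono nhdsWithin_le_nhds
  obtain ⟨c', hc', hcc'⟩ := (hnear.and self_mem_nhdsWithin).exists
  exact ⟨c', hcc', exists_mem_stdSimplex_smul_le_mulVec hy fun j => (hc' j).le⟩

lemma isCompact_setOf_exists_smul_le_mulVec (P : Matrix ι ι ℝ) (c₀ : ℝ) :
    IsCompact {c | c₀ ≤ c ∧ ∃ x ∈ stdSimplex ℝ ι, c • x ≤ P *ᵥ x} := by
  obtain ⟨C, hC⟩ := (isCompact_stdSimplex ℝ ι).bddAbove_image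
    (f := fun x => ∑ i, (P *ᵥ x) i) (by fun_prop)
  have hbound : ∀ c, ∀ x ∈ stdSimplex ℝ ι, c • x ≤ P *ᵥ x → c ≤ C := fun c x hx hcx =>
    calc c = ∑ i, (c • x) i := by simp [← Finset.mul_sum, hx.2]
      _ ≤ ∑ i, (P *ᵥ x) i := Finset.sum_le_sum fun i _ => hcx i
      _ ≤ C := hC ⟨x, hx, rfl⟩
  have hgraph : IsCompact ((Set.Icc c₀ C ×ˢ stdSimplex ℝ ι) ∩
      {p : ℝ × (ι → ℝ) | p.1 • p.2 ≤ P *ᵥ p.2}) :=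
    (isCompact_Icc.prod (isCompact_stdSimplex ℝ ι)).inter_right
      (isClosed_le (by fun_prop) (by fun_prop))
  convert hgraph.image continuous_fst using 1
  ext c
  constructor
  · rintro ⟨hc, x, hx, hcx⟩
    exact ⟨(c, x), ⟨⟨⟨hc, hbound c x hx hcx⟩, hx⟩, hcx⟩, rfl⟩
  · rintro ⟨⟨c, x⟩, ⟨⟨hc, hx⟩, hcx⟩, rfl⟩
    exact ⟨hc.1, x, hx, hcx⟩

variable [DecidableEq ι]

-- Collatz–Wielandt: the largest `ρ` with `ρ • x ≤ P *ᵥ x` for some `x` in the simplex is an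
-- eigenvalue, since otherwise it could be enlarged.
theorem exists_mem_spectrum_gt_of_smul_lt_mulVec (hP : ∀ i j, 0 < P i j) {u : ι → ℝ}
    (hu : 0 < u) {c : ℝ} (h : c • u < P *ᵥ u) : ∃ ρ ∈ spectrum ℝ P, c < ρ := by
  obtain ⟨c', hc', hc'S⟩ := exists_gt_smul_le_mulVec hP hu h
  obtain ⟨ρ, ⟨hρ, x, hx, hρx⟩, hmax⟩ :=
    (isCompact_setOf_exists_smul_le_mulVec P c').exists_isGreatest ⟨c', le_rfl, hc'S⟩
  have hx₀ : x ≠ 0 := by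
    rintro rfl
    simpa using hx.2
  refine ⟨ρ, mem_spectrum_iff_exists_mulVec_eq_smul.mpr ⟨x, hx₀, ?_⟩, hc'.lt.trans_le hρ⟩
  by_contra hne
  obtain ⟨ρ', hρ', hρ'S⟩ := exists_gt_smul_le_mulVec hP
    (lt_of_le_of_ne hx.1 hx₀.symm) (lt_of_le_of_ne hρx (Ne.symm hne))
  exact (hmax ⟨hρ.trans hρ'.le, hρ'S⟩).not_gt hρ'

lemma exists_mem_spectrum_pos_of_pos [Nonempty ι] (hP : ∀ i j, 0 < P i j) :
    ∃ ρ ∈ spectrum ℝ P, 0 < ρ := by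
  have h1 : (0 : ι → ℝ) < 1 := zero_lt_one
  refine exists_mem_spectrum_gt_of_smul_lt_mulVec hP h1 (Pi.lt_def.mpr ?_)
  rw [zero_smul]
  exact ⟨fun i => (mulVec_pos_of_pos hP h1 i).le, Classical.arbitrary ι, mulVec_pos_of_pos hP h1 _⟩

lemma exists_mem_spectrum_gt_of_smul_le_mulVec (hP : ∀ i j, 0 < P i j) {c : ℝ}
    {v : ι → ℝ} (hv : v ≠ 0) {i : ι} (hvi : v i = 0) (h : c • v ≤ P *ᵥ v) :
    ∃ ρ ∈ spectrum ℝ P, c < ρ := by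
  have hpos : 0 < v⁺ := by
    refine lt_of_le_of_ne (posPart_nonneg v) fun h₀ => ?_
    have hneg : 0 < -v :=
      lt_of_le_of_ne (neg_nonneg.mpr (posPart_eq_zero.mp h₀.symm)) (neg_ne_zero.mpr hv).symm
    have hlt := mulVec_pos_of_pos hP hneg i
    have hle : c * v i ≤ (P *ᵥ v) i := h i
    rw [hvi, mul_zero] at hle
    rw [mulVec_neg, Pi.neg_apply] at hlt
    linarith
  have hPpos := mulVec_pos_of_pos hP hpos
  have hvi' : v⁺ i = 0 := by rw [Pi.posPart_apply, hvi, posPart_zero]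
  refine exists_mem_spectrum_gt_of_smul_lt_mulVec hP hpos (Pi.lt_def.mpr ⟨fun j => ?_, i, ?_⟩)
  · rcases le_total (v j) 0 with hj | hj
    · have hvj : v⁺ j = 0 := by rw [Pi.posPart_apply, posPart_eq_zero.mpr hj]
      simpa [hvj] using (hPpos j).le
    · have hvj : v⁺ j = v j := by rw [Pi.posPart_apply, posPart_eq_self.mpr hj]
      calc (c • v⁺) j = (c • v) j := by simp only [Pi.smul_apply, hvj]
        _ ≤ (P *ᵥ v) j := h j
        _ ≤ (P *ᵥ v⁺) j := mulVec_mono_of_nonneg (fun i j => (hP i j).le) (le_posPart v) j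
  · simpa [hvi'] using hPpos i

lemma exists_mem_spectrum_gt_of_smul_eq_mulVec_add_single (hP : ∀ i j, 0 < P i j) {c : ℝ}
    {v : ι → ℝ} (hv : v ≠ 0) {i : ι} (hvi : v i = 0) {b : ℝ}
    (h : c • v = P *ᵥ (v + Pi.single i b)) : ∃ ρ ∈ spectrum ℝ P, c < ρ := by
  wlog hb : b ≤ 0 generalizing v b
  · refine this (neg_ne_zero.mpr hv) (by simp [hvi]) (b := -b) ?_ (by linarith)
    rw [smul_neg, h, ← mulVec_neg, neg_add, Pi.single_neg]
  refine exists_mem_spectrum_gt_of_smul_le_mulVec hP hv hvi ?_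
  rw [h]
  exact mulVec_mono_of_nonneg (fun i j => (hP i j).le)
    (add_le_of_nonpos_right (Pi.single_nonpos.mpr hb))

end PositiveMatrix

section SignSymmetric

variable {ι κ : Type*} {J : Set ι} {A : Matrix ι ι ℝ}

open Classical in
/-- The vector which is `1` on `J` and `-1` off `J`; conjugation by the diagonal matrix it defines
turns strictly `J`-sign-symmetric matrices into positive ones. -/
noncomputable def signature (J : Set ι) (i : ι) : ℝ := if i ∈ J then 1 else -1

lemma signature_mul_self (J : Set ι) (i : ι) : signature J i * signature J i = 1 := by
  unfold signature
  split_ifs <;> norm_num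

lemma IsSJS.signature_mul_mul_pos (hA : IsSJS J A) (i j : ι) :
    0 < signature J i * A i j * signature J j := by
  have hle := hA.1.1 i j
  have hge := hA.1.2 i j
  have hne := hA.2 i j
  by_cases hi : i ∈ J <;> by_cases hj : j ∈ J <;>
    simp_all [signature, lt_iff_le_and_ne, eq_comm]

lemma isSJS_of_mul_mul_pos {η : ι → ℝ} (h : ∀ i j, 0 < η i * A i j * η j) :
    IsSJS {i | 0 < η i} A := by
  have hη : ∀ i, η i ≠ 0 := fun i hi => by simpa [hi] using h i i
  refine ⟨⟨fun i j hij => ?_, fun i j hij => ?_⟩, fun i j hij => by simpa [hij] using h i j⟩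
  · have hpos : 0 < η i * η j := by
      rcases hij with ⟨hi, hj⟩ | ⟨hi, hj⟩
      · exact mul_pos hi hj
      · exact mul_pos_of_neg_of_neg (lt_of_le_of_ne (not_lt.mp hi) (hη i))
          (lt_of_le_of_ne (not_lt.mp hj) (hη j))
    refine le_of_lt (pos_of_mul_pos_right (b := A i j) ?_ hpos.le)
    linarith [h i j, mul_right_comm (η i) (A i j) (η j)]
  · have hneg : η i * η j < 0 := by
      rcases hij with ⟨hi, hj⟩ | ⟨hi, hj⟩
      · exact mul_neg_of_pos_of_neg hi (lt_of_le_of_ne (not_lt.mp hj) (hη j))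
      · exact mul_neg_of_neg_of_pos (lt_of_le_of_ne (not_lt.mp hi) (hη i)) hj
    nlinarith [h i j]

lemma IsSJS.diag_pos (hA : IsSJS J A) (i : ι) : 0 < A i i := by
  have h := hA.signature_mul_mul_pos i i
  rwa [mul_right_comm, signature_mul_self, one_mul] at h

lemma IsSJS.submatrix (hA : IsSJS J A) (f : κ → ι) : IsSJS (f ⁻¹' J) (A.submatrix f f) :=
  ⟨⟨fun i j => hA.1.1 (f i) (f j), fun i j => hA.1.2 (f i) (f j)⟩, fun i j => hA.2 (f i) (f j)⟩

lemma IsSJS.smul (hA : IsSJS J A) {c : ℝ} (hc : 0 < c) : IsSJS J (c • A) :=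
  ⟨⟨fun i j h => mul_nonneg hc.le (hA.1.1 i j h),
    fun i j h => mul_nonpos_of_nonneg_of_nonpos hc.le (hA.1.2 i j h)⟩,
    fun i j => mul_ne_zero hc.ne' (hA.2 i j)⟩

variable [Fintype ι] [DecidableEq ι]

lemma IsSJS.diagonal_mul_mul_diagonal_pos (hA : IsSJS J A) (i j : ι) :
    0 < (diagonal (signature J) * A * diagonal (signature J)) i j := by
  rw [mul_diagonal, diagonal_mul]
  exact hA.signature_mul_mul_pos i j

lemma diagonal_signature_mul_self (J : Set ι) :
    diagonal (signature J) * diagonal (signature J) = 1 := by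
  simp only [diagonal_mul_diagonal, signature_mul_self, diagonal_one]

lemma spectrum_diagonal_signature_mul_mul (J : Set ι) (A : Matrix ι ι ℝ) :
    spectrum ℝ (diagonal (signature J) * A * diagonal (signature J)) = spectrum ℝ A := by
  ext t
  rw [mem_spectrum_iff_isRoot_charpoly, mem_spectrum_iff_isRoot_charpoly, charpoly_mul_comm,
    ← Matrix.mul_assoc, diagonal_signature_mul_self, Matrix.one_mul]

lemma IsSJS.exists_mem_spectrum_pos [Nonempty ι] (hA : IsSJS J A) :
    ∃ ρ ∈ spectrum ℝ A, 0 < ρ := by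
  rw [← spectrum_diagonal_signature_mul_mul J]
  exact exists_mem_spectrum_pos_of_pos hA.diagonal_mul_mul_diagonal_pos

lemma IsSJS.exists_mem_spectrum_gt_of_smul_eq_mulVec_add_single (hA : IsSJS J A) {c : ℝ}
    {v : ι → ℝ} (hv : v ≠ 0) {i : ι} (hvi : v i = 0) {b : ℝ}
    (h : c • v = A *ᵥ (v + Pi.single i b)) :
    ∃ ρ ∈ spectrum ℝ A, c < ρ := by
  set S := diagonal (signature J)
  have hSS : S * S = 1 := diagonal_signature_mul_self J
  have hcancel : ∀ u, S *ᵥ (S *ᵥ u) = u := fun u => by rw [mulVec_mulVec, hSS, one_mulVec]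
  rw [← spectrum_diagonal_signature_mul_mul J]
  refine _root_.exists_mem_spectrum_gt_of_smul_eq_mulVec_add_single
    hA.diagonal_mul_mul_diagonal_pos (v := S *ᵥ v) (i := i) (b := signature J i * b) ?_ ?_ ?_
  · intro h₀
    exact hv (by rw [← hcancel v, h₀, mulVec_zero])
  · rw [mulVec_diagonal, hvi, mul_zero]
  · rw [← diagonal_mulVec_single, ← mulVec_add, ← mulVec_mulVec, hcancel, ← mulVec_mulVec, ← h,
      mulVec_smul]

lemma exists_mem_spectrum_pos_of_isSJS_inv [Nonempty ι] (hA : IsUnit A) (hJ : IsSJS J A⁻¹) :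
    ∃ t ∈ spectrum ℝ A, 0 < t := by
  obtain ⟨ρ, hρ, hρ₀⟩ := hJ.exists_mem_spectrum_pos
  exact ⟨ρ⁻¹, inv_mem_spectrum_of_mem_spectrum_inv hA hρ, inv_pos.mpr hρ₀⟩

lemma exists_mem_spectrum_lt_of_isSJS_inv [Fintype κ] [DecidableEq κ] (hA : IsUnit A)
    (hJ : IsSJS J A⁻¹) (f : κ ↪ ι) {i : ι} (hf : Set.range f = {i}ᶜ) {t : ℝ}
    (ht : t ∈ spectrum ℝ (A.submatrix f f)) (ht₀ : 0 < t) : ∃ s ∈ spectrum ℝ A, s < t := by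
  obtain ⟨w, hw, hAw⟩ := mem_spectrum_iff_exists_mulVec_eq_smul.mp ht
  set v : ι → ℝ := Function.extend f w 0
  have hvf : ∀ k, v (f k) = w k := f.injective.extend_apply w 0
  have hvi : v i = 0 := Function.extend_apply' w (0 : ι → ℝ) i fun h => hf.subset h rfl
  have hv : v ≠ 0 := fun h => hw (funext fun k => by rw [← hvf k, h, Pi.zero_apply, Pi.zero_apply])
  have hAv : A *ᵥ v = t • (v + Pi.single i (t⁻¹ * (A *ᵥ v) i)) := by
    ext j
    by_cases hj : j = i
    · subst hj
      simp [hvi, ht₀.ne']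
    · obtain ⟨k, rfl⟩ : j ∈ Set.range f := hf.symm ▸ hj
      have hk : (A *ᵥ v) (f k) = (A.submatrix f f *ᵥ w) k :=
        congrFun (mulVec_extend A f.injective w) (f k)
      simp [hj, hvf, hk, hAw]
  have hinv : t⁻¹ • v = A⁻¹ *ᵥ (v + Pi.single i (t⁻¹ * (A *ᵥ v) i)) := by
    rw [inv_smul_eq_iff₀ ht₀.ne', ← mulVec_smul, ← hAv, mulVec_mulVec,
      nonsing_inv_mul A ((isUnit_iff_isUnit_det A).mp hA), one_mulVec]
  obtain ⟨ρ, hρ, htρ⟩ := hJ.exists_mem_spectrum_gt_of_smul_eq_mulVec_add_single hv hvi hinv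
  exact ⟨ρ⁻¹, inv_mem_spectrum_of_mem_spectrum_inv hA hρ, inv_lt_of_inv_lt₀ ht₀ htρ⟩

end SignSymmetric

section Minor

variable {m n : ℕ}

lemma minorOn_self (A : Matrix (Fin n) (Fin n) ℝ) (α : Finset (Fin n)) :
    minorOn A α α = (principal A α).det := by
  rw [minorOn, dif_pos rfl]
  exact det_submatrix_equiv_self (α.orderIsoOfFin rfl).toEquiv (principal A α)

lemma spectrum_psub (A : Matrix (Fin n) (Fin n) ℝ) (α : Finset (Fin n)) :
    spectrum ℝ (psub A α) = spectrum ℝ (principal A α) :=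
  spectrum_submatrix_equiv (principal A α) (α.orderIsoOfFin rfl).toEquiv

lemma orderEmbOfFin_map_apply (f : Fin m ↪o Fin n) (s : Finset (Fin m)) {k l : ℕ}
    (hk : s.card = k) (hl : (s.map f.toEmbedding).card = l) (i : Fin l) :
    (s.map f.toEmbedding).orderEmbOfFin hl i =
      f (s.orderEmbOfFin hk (Fin.cast (by rw [← hk, ← hl, Finset.card_map]) i)) := by
  obtain rfl : l = k := by rw [← hk, ← hl, Finset.card_map]
  exact (congrFun (Finset.orderEmbOfFin_unique hl
    (fun i => Finset.mem_map_of_mem _ (s.orderEmbOfFin_mem hk i))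
    (f.strictMono.comp (s.orderEmbOfFin hk).strictMono)) i).symm

lemma minorOn_submatrix (A : Matrix (Fin n) (Fin n) ℝ) (f : Fin m ↪o Fin n)
    (s t : Finset (Fin m)) :
    minorOn (A.submatrix f f) s t = minorOn A (s.map f.toEmbedding) (t.map f.toEmbedding) := by
  by_cases h : t.card = s.card
  · have h' : (t.map f.toEmbedding).card = (s.map f.toEmbedding).card := by
      rw [Finset.card_map, Finset.card_map, h]
    rw [minorOn, minorOn, dif_pos h, dif_pos h',
      ← det_submatrix_equiv_self (finCongr (Finset.card_map f.toEmbedding).symm)]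
    congr 1
    ext i j
    simp [orderEmbOfFin_map_apply f s rfl, orderEmbOfFin_map_apply f t h]
  · rw [minorOn, minorOn, dif_neg h, dif_neg (by rwa [Finset.card_map, Finset.card_map])]

lemma minorOn_compl_singleton (A : Matrix (Fin (m + 1)) (Fin (m + 1)) ℝ) (i j : Fin (m + 1)) :
    minorOn A {i}ᶜ {j}ᶜ = (A.submatrix i.succAbove j.succAbove).det := by
  have hcard : ∀ k : Fin (m + 1), ({k}ᶜ : Finset (Fin (m + 1))).card = m := by
    simp [Finset.card_compl]
  rw [minorOn, dif_pos ((hcard j).trans (hcard i).symm),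
    ← det_submatrix_equiv_self (finCongr (hcard i))]
  congr 1
  ext k l
  simp [Finset.orderEmbOfFin_compl_singleton_apply]

lemma adjugate_apply_eq_minorOn (A : Matrix (Fin (m + 1)) (Fin (m + 1)) ℝ)
    (i j : Fin (m + 1)) :
    adjugate A i j = (-1) ^ (j + i : ℕ) * minorOn A {j}ᶜ {i}ᶜ := by
  rw [adjugate_fin_succ_eq_det_submatrix, minorOn_compl_singleton]

-- The checkerboard signs of the adjugate are absorbed into the sign pattern.
lemma exists_isSJS_adjugate {A : Matrix (Fin n) (Fin n) ℝ}
    {J : Set {s : Finset (Fin n) // s.card = n - 1}} (hJ : IsSJS J (compound A (n - 1))) :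
    ∃ J' : Set (Fin n), IsSJS J' (adjugate A) := by
  cases n with
  | zero => exact ⟨∅, by simp [IsSJS, IsJS]⟩
  | succ m =>
    let c : Fin (m + 1) → {s : Finset (Fin (m + 1)) // s.card = m} :=
      fun i => ⟨{i}ᶜ, by simp [Finset.card_compl]⟩
    refine ⟨_, isSJS_of_mul_mul_pos (η := fun i : Fin (m + 1) => (-1) ^ (i : ℕ) * signature J (c i))
      fun i j => ?_⟩
    have hpos : 0 < signature J (c j) * minorOn A {j}ᶜ {i}ᶜ * signature J (c i) :=
      hJ.signature_mul_mul_pos (c j) (c i)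
    have hsq : ∀ k : ℕ, (-1 : ℝ) ^ k * (-1) ^ k = 1 := fun k => by rw [← mul_pow]; norm_num
    convert hpos using 1
    rw [adjugate_apply_eq_minorOn, pow_add]
    linear_combination signature J (c j) * minorOn A {j}ᶜ {i}ᶜ * signature J (c i) *
      ((-1) ^ (i : ℕ) * (-1) ^ (i : ℕ) * hsq j + hsq i)

lemma compound_submatrix (A : Matrix (Fin n) (Fin n) ℝ) (f : Fin m ↪o Fin n) (j : ℕ) :
    compound (A.submatrix f f) j =
      (compound A j).submatrix (fun s => ⟨s.1.map f.toEmbedding, by rw [Finset.card_map, s.2]⟩)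
        (fun s => ⟨s.1.map f.toEmbedding, by rw [Finset.card_map, s.2]⟩) := by
  ext s t
  exact minorOn_submatrix A f s t

end Minor

section Kotelyansky

variable {n : ℕ} {A : Matrix (Fin n) (Fin n) ℝ}

lemma IsSTJS.isSJSK (hA : IsSTJS A) : IsSJSK A := by
  refine ⟨?_, fun α hα => ?_⟩
  · rcases n.eq_zero_or_pos with rfl | hn
    · simp
    · obtain ⟨J, hJ⟩ := hA n hn le_rfl
      have hdet := hJ.diag_pos ⟨Finset.univ, Finset.card_fin n⟩
      rw [compound, minorOn_self] at hdet
      rwa [← det_submatrix_equiv_self (Equiv.subtypeUnivEquiv Finset.mem_univ)]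
  · obtain ⟨J, hJ⟩ := hA (α.card - 1) (by omega)
      ((Nat.sub_le _ _).trans (card_finset_fin_le α))
    rw [psub, compound_submatrix]
    exact ⟨_, hJ.submatrix _⟩

lemma IsSJSK.isPMatrix (hA : IsSJSK A) : IsPMatrix A := by
  intro α
  rcases eq_or_ne α Finset.univ with rfl | hα
  · have hdet := hA.1
    rwa [← det_submatrix_equiv_self (Equiv.subtypeUnivEquiv Finset.mem_univ)] at hdet
  rcases α.eq_empty_or_nonempty with rfl | hne
  · rw [det_isEmpty]
    exact one_pos
  obtain ⟨i, hi⟩ : ∃ i, i ∉ α := by simpa [Finset.eq_univ_iff_forall] using hα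
  set γ := insert i α
  have hγ : γ.card = α.card + 1 := Finset.card_insert_of_notMem hi
  obtain ⟨J, hJ⟩ := hA.2 γ (by have := hne.card_pos; omega)
  have hmap : Finset.univ.map (γ.orderEmbOfFin rfl).toEmbedding = γ :=
    Finset.map_orderEmbOfFin_univ γ rfl
  obtain ⟨s, -, hs⟩ := Finset.subset_map_iff.mp
    ((Finset.subset_insert i α).trans hmap.symm.subset)
  have hcard : s.card = γ.card - 1 := by
    rw [← Finset.card_map, ← hs, Nat.eq_sub_of_add_eq hγ.symm]
  have hpos := hJ.diag_pos ⟨s, hcard⟩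
  rwa [compound, psub, minorOn_submatrix, ← hs, minorOn_self] at hpos

lemma IsSJSK.isUnit_principal (hA : IsSJSK A) (α : Finset (Fin n)) : IsUnit (principal A α) :=
  (isUnit_iff_isUnit_det _).mpr (hA.isPMatrix α).ne'.isUnit

lemma IsSJSK.exists_isSJS_inv_psub (hA : IsSJSK A) (α : Finset (Fin n)) :
    ∃ J : Set (Fin α.card), IsSJS J (psub A α)⁻¹ := by
  have hdet : 0 < (psub A α).det := by
    have h := hA.isPMatrix α
    rwa [← minorOn_self, minorOn, dif_pos rfl] at h
  obtain ⟨J, hJ⟩ : ∃ J : Set (Fin α.card), IsSJS J (adjugate (psub A α)) := by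
    rcases le_or_gt 2 α.card with h2 | h2
    · obtain ⟨J, hJ⟩ := hA.2 α h2
      exact exists_isSJS_adjugate hJ
    · have : Subsingleton (Fin α.card) := Fin.subsingleton_iff_le_one.mpr (Nat.le_of_lt_succ h2)
      rw [adjugate_subsingleton]
      exact ⟨_, isSJS_of_mul_mul_pos (η := 1) fun i j => by
        simp [one_apply, Subsingleton.elim i j]⟩
  refine ⟨J, ?_⟩
  rw [inv_def, Ring.inverse_eq_inv']
  exact hJ.smul (inv_pos.mpr hdet)

lemma IsSJSK.exists_isSJS_inv_principal (hA : IsSJSK A) (α : Finset (Fin n)) :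
    ∃ J : Set α, IsSJS J (principal A α)⁻¹ := by
  obtain ⟨J, hJ⟩ := hA.exists_isSJS_inv_psub α
  let e := (α.orderIsoOfFin rfl).toEquiv
  have heq : principal A α = (psub A α).submatrix e.symm e.symm := by
    ext i j
    simp [principal, psub, e, ← Finset.coe_orderIsoOfFin_apply]
  refine ⟨e.symm ⁻¹' J, ?_⟩
  rw [heq, inv_submatrix_equiv]
  exact hJ.submatrix _

lemma IsSJSK.pos_of_mem_spectrum_principal (hA : IsSJSK A) {α : Finset (Fin n)} {t : ℝ}
    (ht : t ∈ spectrum ℝ (principal A α)) : 0 < t :=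
  (hA.isPMatrix.submatrix (Function.Embedding.subtype (· ∈ α))).pos_of_mem_spectrum ht

lemma IsSJSK.spectrum_principal_nonempty (hA : IsSJSK A) {α : Finset (Fin n)}
    (hα : α.Nonempty) : (spectrum ℝ (principal A α)).Nonempty := by
  have := hα.to_subtype
  obtain ⟨J, hJ⟩ := hA.exists_isSJS_inv_principal α
  obtain ⟨t, ht, -⟩ := exists_mem_spectrum_pos_of_isSJS_inv (hA.isUnit_principal α) hJ
  exact ⟨t, ht⟩

lemma IsSJSK.exists_mem_spectrum_principal_insert_lt (hA : IsSJSK A) {α : Finset (Fin n)}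
    {i : Fin n} (hi : i ∉ α) {t : ℝ} (ht : t ∈ spectrum ℝ (principal A α)) :
    ∃ s ∈ spectrum ℝ (principal A (insert i α)), s < t := by
  obtain ⟨J, hJ⟩ := hA.exists_isSJS_inv_principal (insert i α)
  let f : α ↪ ↥(insert i α) := Subtype.impEmbedding _ _ fun _ => Finset.mem_insert_of_mem
  have hf : Set.range f = {⟨i, Finset.mem_insert_self i α⟩}ᶜ := by
    ext ⟨j, hj⟩
    have hmem := Finset.mem_insert.mp hj
    simp only [f, Set.mem_range, Subtype.exists, Subtype.ext_iff, Subtype.impEmbedding_apply_coe,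
      Set.mem_compl_iff, Set.mem_singleton_iff]
    grind
  exact exists_mem_spectrum_lt_of_isSJS_inv (hA.isUnit_principal _) hJ f hf ht
    (hA.pos_of_mem_spectrum_principal ht)

end Kotelyansky

section SmallestEigenvalue

variable {n : ℕ} {A B : Matrix (Fin n) (Fin n) ℝ}

lemma lt_lval_iff {x : EReal} : x < lval B ↔ x < ⊤ ∧ ∀ t ∈ spectrum ℝ B, x < (t : EReal) := by
  have hfin :
      (insert (⊤ : EReal) ((fun t : ℝ => (t : EReal)) '' {t | B.charpoly.IsRoot t})).Finite :=
    ((Polynomial.finite_setOfPred_isRoot B.charpoly_monic.ne_zero).image _).insert _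
  rw [lval, hfin.lt_csInf_iff (Set.insert_nonempty _ _)]
  simp [mem_spectrum_iff_isRoot_charpoly]

lemma lval_le_of_mem_spectrum {t : ℝ} (ht : t ∈ spectrum ℝ B) : lval B ≤ t :=
  sInf_le (Or.inr ⟨t, mem_spectrum_iff_isRoot_charpoly.mp ht, rfl⟩)

lemma IsSJSK.lval_psub_lt_top (hA : IsSJSK A) {α : Finset (Fin n)} (hα : α.Nonempty) :
    lval (psub A α) < ⊤ := by
  obtain ⟨t, ht⟩ := hA.spectrum_principal_nonempty hα
  rw [← spectrum_psub] at ht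
  exact (lval_le_of_mem_spectrum ht).trans_lt (EReal.coe_lt_top t)

lemma IsSJSK.strictAnti_lval_psub (hA : IsSJSK A) : StrictAnti fun α => lval (psub A α) := by
  refine Finset.strictAnti_iff_forall_lt_insert.mpr fun α i hi => ?_
  refine lt_lval_iff.mpr ⟨hA.lval_psub_lt_top (Finset.insert_nonempty i α), fun t ht => ?_⟩
  rw [spectrum_psub] at ht
  obtain ⟨s, hs, hst⟩ := hA.exists_mem_spectrum_principal_insert_lt hi ht
  rw [← spectrum_psub] at hs
  exact (lval_le_of_mem_spectrum hs).trans_lt (EReal.coe_lt_coe hst)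

lemma IsSJSK.lval_pos (hA : IsSJSK A) : 0 < lval A :=
  lt_lval_iff.mpr ⟨EReal.zero_lt_top, fun _ ht =>
    EReal.coe_pos.mpr (hA.isPMatrix.pos_of_mem_spectrum ht)⟩

end SmallestEigenvalue

theorem stjs_is_strict_tau_general {n : ℕ} (A : Matrix (Fin n) (Fin n) ℝ) (hA : IsSJSK A) :
    (0 : EReal) < lval A ∧
    (∀ α : Finset (Fin n), α.Nonempty → lval (psub A α) < ⊤) ∧
    (∀ α β : Finset (Fin n), β.Nonempty → β ⊂ α →
      lval (psub A α) < lval (psub A β) ∧ lval (psub A β) < ⊤) :=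
  ⟨hA.lval_pos, fun _ => hA.lval_psub_lt_top, fun _ _ hβ hβα =>
    ⟨hA.strictAnti_lval_psub hβα, hA.lval_psub_lt_top hβ⟩⟩

/-- Every STJS-matrix is a strict τ-matrix (τ^<-matrix):
`l(A) > 0`, every principal submatrix of `A` has a real eigenvalue, and
`l(A(α)) < l(A(β)) < ∞` whenever `∅ ≠ β ⊊ α ⊆ {1,…,n}`. -/
theorem stjs_is_strict_tau {n : ℕ} (A : Matrix (Fin n) (Fin n) ℝ) (hA : IsSTJS A) :
    (0 : EReal) < lval A ∧
    (∀ α : Finset (Fin n), α.Nonempty → lval (psub A α) < ⊤) ∧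
    (∀ α β : Finset (Fin n), β.Nonempty → β ⊂ α →
      lval (psub A α) < lval (psub A β) ∧ lval (psub A β) < ⊤) :=
  stjs_is_strict_tau_general A hA.isSJSK
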